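/- Let β > 0 and let λ₁, λ₂ ∈ [−1, 1] be such that λ₁ + λ₂ ∈ [−1, 1]. Then for every real x one has β·(λ₁ ∘ x)·(λ₂ ∘ x) ≠ 1 and (λ₁ ∘ x) ⊕ (λ₂ ∘ x) = (λ₁ + λ₂) ∘ x. -/

import Mathlib

/-- Generalized addition `x ⊕ y = (x + y)/(1 - β x y)`. -/
noncomputable def oplus (β x y : ℝ) : ℝ := (x + y) / (1 - β * x * y)

/-- Generalized multiplication by a scalar `λ ∘ x = (1/√β) tan (λ arctan (√β x))`. -/
noncomputable def circ (β l x : ℝ) : ℝ :=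
  (1 / Real.sqrt β) * Real.tan (l * Real.arctan (Real.sqrt β * x))

/-- Scaling by `l ∈ [-1, 1]` keeps an arctangent inside `(-π/2, π/2)`, where the cosine is positive. -/
theorem cos_mul_arctan_pos {l : ℝ} (hl : l ∈ Set.Icc (-1 : ℝ) 1) (y : ℝ) :
    0 < Real.cos (l * Real.arctan y) := by
  have hy : |Real.arctan y| < Real.pi / 2 :=
    abs_lt.mpr ⟨Real.neg_pi_div_two_lt_arctan y, Real.arctan_lt_pi_div_two y⟩
  have hly : |l * Real.arctan y| < Real.pi / 2 := by
    rw [abs_mul]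
    exact (mul_le_of_le_one_left (abs_nonneg _) (abs_le.mpr hl)).trans_lt hy
  exact Real.cos_pos_of_mem_Ioo (abs_lt.mp hly)

/-- The addition formula for the tangent, with the poles excluded by nonvanishing cosines. -/
theorem tan_mul_tan_ne_one_and_tan_add {a b : ℝ} (ha : Real.cos a ≠ 0) (hb : Real.cos b ≠ 0)
    (hab : Real.cos (a + b) ≠ 0) :
    Real.tan a * Real.tan b ≠ 1 ∧
      Real.tan (a + b) = (Real.tan a + Real.tan b) / (1 - Real.tan a * Real.tan b) := by
  constructor
  · intro h
    rw [Real.tan_eq_sin_div_cos, Real.tan_eq_sin_div_cos, div_mul_div_comm,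
      div_eq_one_iff_eq (mul_ne_zero ha hb)] at h
    exact hab (by rw [Real.cos_add, h, sub_self])
  · exact Real.tan_add' ⟨Real.cos_ne_zero_iff.mp ha, Real.cos_ne_zero_iff.mp hb⟩

theorem circ_add_scalars (β l₁ l₂ : ℝ) (hβ : 0 < β)
    (hl₁ : l₁ ∈ Set.Icc (-1 : ℝ) 1) (hl₂ : l₂ ∈ Set.Icc (-1 : ℝ) 1)
    (hl : l₁ + l₂ ∈ Set.Icc (-1 : ℝ) 1) (x : ℝ) :
    β * circ β l₁ x * circ β l₂ x ≠ 1 ∧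
    oplus β (circ β l₁ x) (circ β l₂ x) = circ β (l₁ + l₂) x := by
  have hs : Real.sqrt β ≠ 0 := (Real.sqrt_pos.mpr hβ).ne'
  have hmul : β * circ β l₁ x * circ β l₂ x =
      Real.tan (l₁ * Real.arctan (Real.sqrt β * x)) *
        Real.tan (l₂ * Real.arctan (Real.sqrt β * x)) := by
    unfold circ
    nth_rewrite 1 [← Real.mul_self_sqrt hβ.le]
    field_simp
  obtain ⟨hne, hadd⟩ := tan_mul_tan_ne_one_and_tan_add
    (cos_mul_arctan_pos hl₁ (Real.sqrt β * x)).ne'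
    (cos_mul_arctan_pos hl₂ (Real.sqrt β * x)).ne'
    (by rw [← add_mul]; exact (cos_mul_arctan_pos hl _).ne')
  refine ⟨hmul ▸ hne, ?_⟩
  rw [oplus, hmul, circ, circ, circ, add_mul, hadd, ← mul_add, mul_div_assoc]
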